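/- arXiv:1109.3137 — 2 statements merged into one kernel-verified Lean document; each statement's English description precedes it below -/
import Mathlib

section
/- If a locally finite edge-weighted graph G has finite volume, i.e. the sum of all edge lengths is finite, then the metric completion of G with respect to the path metric is weakly connected. -/
open UniformSpace Filter Topology
open scoped ENNReal

noncomputable section

/-- A locally finite edge-weighted (resistance) graph. -/
structure WGraph (V : Type*) where
  Adj : V → V → Prop
  symm : ∀ u v, Adj u v → Adj v u
  loopless : ∀ v, ¬ Adj v v
  R : V → V → ℝ
  Rsymm : ∀ u v, R u v = R v u
  Rpos : ∀ u v, Adj u v → 0 < R u v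
  locFin : ∀ v, {u | Adj u v}.Finite

namespace WGraph

variable {V : Type*} (G : WGraph V)

/-- The set of edges, as unordered pairs of vertices. -/
def edgeSet : Set (Sym2 V) := {e | ∃ u v, G.Adj u v ∧ e = s(u, v)}

/-- The set of total lengths of finite paths joining `u` to `v`. -/
def pathLengths (u v : V) : Set ℝ :=
  {L | ∃ (n : ℕ) (p : ℕ → V), p 0 = u ∧ p n = v ∧
        (∀ k < n, G.Adj (p k) (p (k + 1))) ∧
        L = ∑ k ∈ Finset.range n, G.R (p k) (p (k + 1))}

/-- `G` is connected: any two vertices are joined by a finite path. -/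
def Connected : Prop := ∀ u v : V, (G.pathLengths u v).Nonempty

/-- The metric on the vertex set is the minimal resistance path metric of `G`. -/
def IsPathMetric [MetricSpace V] : Prop :=
  ∀ u v : V, dist u v = sInf (G.pathLengths u v)

/-- Eventually flat functions: the values differ across only finitely many edges. -/
def EventuallyFlat (φ : V → ℝ) : Prop :=
  {p : V × V | G.Adj p.1 p.2 ∧ φ p.1 ≠ φ p.2}.Finite

open Classical in
/-- The conductance: the reciprocal resistance on edges, `0` off edges. -/
def cond (u v : V) : ℝ := if G.Adj u v then (G.R u v)⁻¹ else 0

/-- `f` is harmonic at `v`: its value is the conductance-weighted average of the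
values at the adjacent vertices. -/
def HarmonicAt (f : V → ℝ) (v : V) : Prop :=
  f v = (∑ u ∈ (G.locFin v).toFinset, G.cond u v)⁻¹ *
          ∑ u ∈ (G.locFin v).toFinset, G.cond u v * f u

/-- The weighted `ℓ²(μ)` inner product. -/
def winner (μ : V → ℝ) (f g : V → ℝ) : ℝ := ∑' v, f v * g v * μ v

/-- The bilinear (energy) form associated to conductances `C`. -/
def Bform (C : V → V → ℝ) (f g : V → ℝ) : ℝ :=
  (1 / 2) * ∑' p : V × V, C p.1 p.2 * (f p.1 - f p.2) * (g p.1 - g p.2)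

/-- The formal Laplacian `Δ_μ`. -/
def lap (C : V → V → ℝ) (μ : V → ℝ) (f : V → ℝ) (v : V) : ℝ :=
  (1 / μ v) * ∑' u, C u v * (f v - f u)

/-- The (possibly infinite) energy of `f`. -/
def energy (C : V → V → ℝ) (f : V → ℝ) : ℝ≥0∞ :=
  (1 / 2) * ∑' p : V × V, ENNReal.ofReal (C p.1 p.2 * (f p.1 - f p.2) ^ 2)

variable [MetricSpace V]

/-- A path in the completion `Ḡ` joining `x` and `y`: a two-sided sequence of
vertices (stationary steps are allowed, so this encodes finite paths, rays and
double rays) converging to `x` and `y` at its two ends. -/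
structure CPath (x y : Completion V) where
  p : ℤ → V
  step : ∀ k, p k = p (k + 1) ∨ G.Adj (p k) (p (k + 1))
  tendsto_left : Tendsto (fun n : ℕ => ((p (-(n : ℤ)) : V) : Completion V)) atTop (nhds x)
  tendsto_right : Tendsto (fun n : ℕ => ((p (n : ℤ) : V) : Completion V)) atTop (nhds y)

end WGraph

/-- The path `γ` uses (contains) the edge `e`. -/
def WGraph.CPath.uses {V : Type*} [MetricSpace V] {G : WGraph V}
    {x y : Completion V} (γ : G.CPath x y) (e : Sym2 V) : Prop :=
  ∃ k : ℤ, γ.p k ≠ γ.p (k + 1) ∧ e = s(γ.p k, γ.p (k + 1))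

namespace WGraph

variable {V : Type*} (G : WGraph V) [MetricSpace V]

/-- The completion `Ḡ` is weakly connected: any two distinct points admit a
finite set of edges met by every path joining them. -/
def WeaklyConnected : Prop :=
  ∀ x y : Completion V, x ≠ y →
    ∃ W : Set (Sym2 V), W.Finite ∧ W ⊆ G.edgeSet ∧
      ∀ γ : G.CPath x y, ∃ e ∈ W, γ.uses e

end WGraph

/-!
The function `f v = dist x v` changes by at most `R u v` along the edge `[u, v]`, so the intervals
swept out by `f` along the edges have total length at most the volume. By Borel-Cantelli almost
every level `r` lies in only finitely many of these intervals. Choose such a level with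
`0 < r < dist x y`: on a path from `x` to `y` the function `f` tends to `0` at one end and to
`dist x y` at the other, so some edge of the path crosses the level `r`.
-/

open MeasureTheory

theorem exists_lt_and_le_succ {ι α : Type*} [Preorder ι] [SuccOrder ι] [IsSuccArchimedean ι]
    [LinearOrder α] {g : ι → α} {r : α} {m n : ι} (hmn : m ≤ n) (hm : g m < r) (hn : r ≤ g n) :
    ∃ k, g k < r ∧ r ≤ g (Order.succ k) := by
  by_contra! hstay
  exact hn.not_gt (Succ.rec hm (fun k _ hk => hstay k hk) hmn)

namespace WGraph

section PathLengths

variable {V : Type*} (G : WGraph V)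

theorem zero_mem_lowerBounds_pathLengths (u v : V) : 0 ∈ lowerBounds (G.pathLengths u v) := by
  rintro _ ⟨n, p, -, -, hadj, rfl⟩
  exact Finset.sum_nonneg fun k hk => (G.Rpos _ _ (hadj k (Finset.mem_range.mp hk))).le

variable {G}

theorem R_mem_pathLengths {u v : V} (h : G.Adj u v) : G.R u v ∈ G.pathLengths u v := by
  refine ⟨1, fun k => if k = 0 then u else v, by simp, by simp, fun k hk => ?_, by simp⟩
  obtain rfl : k = 0 := Nat.lt_one_iff.mp hk
  simpa using h

theorem IsPathMetric.dist_le [MetricSpace V] (hmet : G.IsPathMetric) {u v : V}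
    (h : G.Adj u v) : dist u v ≤ G.R u v :=
  (hmet u v).trans_le <|
    csInf_le ⟨0, G.zero_mem_lowerBounds_pathLengths u v⟩ (R_mem_pathLengths h)

end PathLengths

section LevelCut

variable {V α : Type*} (G : WGraph V)

/-- The interval swept out by the vertex function `f` along an edge, that is, the closed interval
between its values at the two endpoints. -/
def edgeSpan [Lattice α] (f : V → α) : Sym2 V → Set α :=
  Sym2.lift ⟨fun u v => Set.uIcc (f u) (f v), fun _ _ => Set.uIcc_comm _ _⟩

/-- The cut of `G` at the level `r` of the vertex function `f`: the edges along which `f` crosses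
`r`, where attaining `r` at an endpoint counts as crossing. -/
def levelCut [Lattice α] (f : V → α) (r : α) : Set (Sym2 V) :=
  {e ∈ G.edgeSet | r ∈ edgeSpan f e}

variable {G} {f : V → ℝ}

theorem volume_edgeSpan_le (hf : ∀ u v, G.Adj u v → |f v - f u| ≤ G.R u v) {e : Sym2 V}
    (he : e ∈ G.edgeSet) :
    volume (edgeSpan f e) ≤ ENNReal.ofReal (Sym2.lift ⟨G.R, G.Rsymm⟩ e) := by
  obtain ⟨u, v, huv, rfl⟩ := he
  calc volume (Set.uIcc (f u) (f v)) = ENNReal.ofReal |f v - f u| := Real.volume_interval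
    _ ≤ ENNReal.ofReal (G.R u v) := ENNReal.ofReal_le_ofReal (hf u v huv)

theorem countable_edgeSet_of_finite_volume
    (hvol : ∑' e : G.edgeSet, ENNReal.ofReal (Sym2.lift ⟨G.R, G.Rsymm⟩ (e : Sym2 V)) ≠ ⊤) :
    Countable G.edgeSet := by
  refine Set.countable_univ_iff.mp
    ((Summable.countable_support_ennreal hvol).mono fun ⟨_, u, v, huv, he⟩ _ => ?_)
  subst he
  exact (ENNReal.ofReal_pos.mpr (G.Rpos u v huv)).ne'

theorem ae_finite_levelCut (hf : ∀ u v, G.Adj u v → |f v - f u| ≤ G.R u v)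
    (hvol : ∑' e : G.edgeSet, ENNReal.ofReal (Sym2.lift ⟨G.R, G.Rsymm⟩ (e : Sym2 V)) ≠ ⊤) :
    ∀ᵐ r : ℝ, (G.levelCut f r).Finite := by
  have : Countable G.edgeSet := countable_edgeSet_of_finite_volume hvol
  have hspan : ∑' e : G.edgeSet, volume (edgeSpan f e) ≠ ⊤ :=
    ne_top_of_le_ne_top hvol (ENNReal.tsum_le_tsum fun e => volume_edgeSpan_le hf e.2)
  filter_upwards [ae_finite_setOfPred_mem hspan] with r hr
  exact (hr.image Subtype.val).subset fun e he => ⟨⟨e, he.1⟩, he.2, rfl⟩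

end LevelCut

theorem CPath.exists_mem_levelCut_uses {V α : Type*} [MetricSpace V] {G : WGraph V}
    [LinearOrder α] [TopologicalSpace α] [OrderClosedTopology α] {x y : Completion V}
    (γ : G.CPath x y) {φ : Completion V → α} (hφ : Continuous φ) {r : α}
    (hx : φ x < r) (hy : r < φ y) :
    ∃ e ∈ G.levelCut (fun v => φ v) r, γ.uses e := by
  obtain ⟨m, hm⟩ :=
    (((hφ.tendsto x).comp γ.tendsto_left).eventually_lt_const hx).exists
  obtain ⟨n, hn⟩ :=
    (((hφ.tendsto y).comp γ.tendsto_right).eventually_const_lt hy).exists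
  obtain ⟨k, hk, hk'⟩ : ∃ k : ℤ, φ (γ.p k) < r ∧ r ≤ φ (γ.p (k + 1)) :=
    exists_lt_and_le_succ (g := fun k => φ (γ.p k)) (by lia : -(m : ℤ) ≤ n) hm hn.le
  have hne : γ.p k ≠ γ.p (k + 1) := fun h => (hk.trans_le hk').ne (by rw [h])
  have hadj : G.Adj (γ.p k) (γ.p (k + 1)) := (γ.step k).resolve_left hne
  exact ⟨s(γ.p k, γ.p (k + 1)), ⟨⟨_, _, hadj, rfl⟩, Set.mem_uIcc_of_le hk.le hk'⟩, k, hne, rfl⟩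

end WGraph

theorem finiteVolume_weaklyConnected_general {V : Type*} [MetricSpace V] (G : WGraph V)
    (hdist : ∀ u v, G.Adj u v → dist u v ≤ G.R u v)
    (hvol : ∑' e : G.edgeSet, ENNReal.ofReal (Sym2.lift ⟨G.R, G.Rsymm⟩ (e : Sym2 V)) ≠ ⊤) :
    G.WeaklyConnected := by
  intro x y hxy
  have hlip (u v : V) (huv : G.Adj u v) :
      |dist x (v : Completion V) - dist x (u : Completion V)| ≤ G.R u v :=
    calc |dist x (v : Completion V) - dist x (u : Completion V)|
        ≤ dist (u : Completion V) v := by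
          simpa only [dist_comm] using abs_dist_sub_le (v : Completion V) u x
      _ = dist u v := Completion.dist_eq u v
      _ ≤ G.R u v := hdist u v huv
  obtain ⟨r, hfin, hr_pos, hr_lt⟩ :=
    (Measure.dense_of_ae (WGraph.ae_finite_levelCut hlip hvol)).exists_between (dist_pos.mpr hxy)
  exact ⟨_, hfin, fun _ he => he.1, fun γ =>
    γ.exists_mem_levelCut_uses (continuous_const.dist continuous_id)
      (by simpa only [id_eq, dist_self] using hr_pos) hr_lt⟩

/-- a locally finite edge-weighted graph of finite volume has a
weakly connected completion. -/
theorem finiteVolume_weaklyConnected {V : Type*} [MetricSpace V] [Countable V]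
    (G : WGraph V) (hmet : G.IsPathMetric) (hconn : G.Connected)
    (hvol : ∑' e : G.edgeSet, ENNReal.ofReal (Sym2.lift ⟨G.R, G.Rsymm⟩ (e : Sym2 V)) ≠ ⊤) :
    G.WeaklyConnected :=
  finiteVolume_weaklyConnected_general G (fun _ _ => hmet.dist_le) hvol
end
end

section
/- If G is connected with finite diameter and f lies in H¹₀(μ), the closure in H¹(μ) of the finitely supported functions, then the unique continuous extension of f to the completion Ḡ vanishes at every point of Ḡ \ G. -/
/-!
Cauchy–Schwarz along a path without repeated edges gives `(g u - g v) ^ 2 ≤ L * E(g)`, where `L` is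
the total resistance of the path and `E` the energy; minimizing over paths, every function of finite
energy satisfies `(g u - g v) ^ 2 ≤ d(u, v) * E(g)`. Applied to the differences `fs i - f`, this
turns convergence at one vertex together with convergence in energy into uniform convergence on
bounded sets. A point of the completion outside the graph has bounded neighbourhoods, and a finitely
supported function vanishes near it, since its support is closed in the completion. The uniform
limit `f` therefore tends to `0` there.
-/

open UniformSpace Filter Topology
open scoped ENNReal

noncomputable section

theorem sum_map_darts_sub {V A : Type*} [AddCommGroup A] {H : SimpleGraph V} (g : V → A)
    {u v : V} (w : H.Walk u v) : (w.darts.map fun d => g d.fst - g d.snd).sum = g u - g v := by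
  induction w with
  | nil => simp
  | cons _ _ ih => simp [ih]

theorem eventuallyEq_zero_comap_nhds_of_finite_support {α X M : Type*} [TopologicalSpace X]
    [T1Space X] [Zero M] {g : α → M} (hg : g.support.Finite) {i : α → X} {x : X}
    (hx : x ∉ Set.range i) :
    g =ᶠ[comap i (𝓝 x)] 0 := by
  have hx' : x ∉ i '' g.support := fun h => hx (Set.image_subset_range _ _ h)
  filter_upwards [preimage_mem_comap ((hg.image i).isClosed.isOpen_compl.mem_nhds hx')] with a ha
  by_contra hne
  exact ha ⟨a, hne, rfl⟩

theorem exists_isBounded_mem_comap_coe_nhds {X : Type*} [PseudoMetricSpace X] (x : Completion X) :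
    ∃ s ∈ comap ((↑) : X → Completion X) (𝓝 x), Bornology.IsBounded s :=
  ⟨_, preimage_mem_comap (Metric.ball_mem_nhds x one_pos),
    Completion.coe_isometry.antilipschitz.isBounded_preimage Metric.isBounded_ball⟩

namespace WGraph

section Walks

variable {V : Type*} (G : WGraph V)

/-- The simple graph underlying a weighted graph, which makes Mathlib's walks and paths
available. -/
def toSimpleGraph : SimpleGraph V where
  Adj := G.Adj
  symm := ⟨G.symm⟩
  loopless := ⟨G.loopless⟩

variable {G} {u v : V}

/-- The total resistance of the edges traversed by a walk, counted with multiplicity; this is the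
length of the walk in the path metric. -/
def walkResistance (w : G.toSimpleGraph.Walk u v) : ℝ :=
  (w.darts.map fun d => G.R d.fst d.snd).sum

theorem walkResistance_cons {u' : V} (h : G.toSimpleGraph.Adj u' u)
    (w : G.toSimpleGraph.Walk u v) : walkResistance (.cons h w) = G.R u' u + walkResistance w := by
  simp [walkResistance]

theorem exists_walk_of_mem_pathLengths {L : ℝ} (hL : L ∈ G.pathLengths u v) :
    ∃ w : G.toSimpleGraph.Walk u v, walkResistance w = L := by
  obtain ⟨n, p, rfl, rfl, hadj, rfl⟩ := hL
  induction n generalizing p with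
  | zero => exact ⟨.nil, by simp [walkResistance]⟩
  | succ n ih =>
    obtain ⟨w, hw⟩ := ih (fun k => p (k + 1)) fun k hk => hadj (k + 1) (by lia)
    have first_adj : G.toSimpleGraph.Adj (p 0) (p (0 + 1)) := hadj 0 n.succ_pos
    refine ⟨.cons first_adj w, (walkResistance_cons first_adj w).trans ?_⟩
    rw [Finset.sum_range_succ', ← hw, add_comm]

theorem walkResistance_nonneg (w : G.toSimpleGraph.Walk u v) : 0 ≤ walkResistance w :=
  List.sum_nonneg <| List.forall_mem_map.2 fun d _ => (G.Rpos _ _ d.adj).le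

theorem walkResistance_bypass_le [DecidableEq V] (w : G.toSimpleGraph.Walk u v) :
    walkResistance w.bypass ≤ walkResistance w :=
  (w.darts_bypass_sublist_darts.map _).sum_le_sum <|
    List.forall_mem_map.2 fun d _ => (G.Rpos _ _ d.adj).le

end Walks

section Energy

variable {V : Type*} {G : WGraph V} {u v : V}

theorem cond_comm (u v : V) : G.cond u v = G.cond v u := by
  have adj_comm : G.Adj u v ↔ G.Adj v u := G.toSimpleGraph.adj_comm u v
  by_cases h : G.Adj u v
  · simp only [cond, if_pos h, if_pos (adj_comm.1 h), G.Rsymm u v]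
  · simp only [cond, if_neg h, if_neg (mt adj_comm.2 h)]

theorem cond_of_adj (h : G.Adj u v) : G.cond u v = (G.R u v)⁻¹ :=
  if_pos h

theorem cond_nonneg (u v : V) : 0 ≤ G.cond u v := by
  unfold cond
  split_ifs with h
  · exact inv_nonneg.2 (G.Rpos u v h).le
  · exact le_rfl

theorem sum_darts_le_energy (g : V → ℝ) {T : Finset G.toSimpleGraph.Dart}
    (hT : Set.InjOn SimpleGraph.Dart.edge (T : Set G.toSimpleGraph.Dart)) :
    ENNReal.ofReal (∑ d ∈ T, G.cond d.fst d.snd * (g d.fst - g d.snd) ^ 2) ≤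
      energy G.cond g := by
  let F : V × V → ℝ≥0∞ := fun p => ENNReal.ofReal (G.cond p.1 p.2 * (g p.1 - g p.2) ^ 2)
  have F_swap (p : V × V) : F p.swap = F p := by
    simp only [F, Prod.fst_swap, Prod.snd_swap, cond_comm p.2, sub_sq_comm (g p.2)]
  -- The factor `1 / 2` in the energy is compensated by counting each edge of `T` in both
  -- orientations.
  let forward : G.toSimpleGraph.Dart ↪ V × V := ⟨_, SimpleGraph.Dart.toProd_injective⟩
  let backward := forward.trans (Equiv.prodComm V V).toEmbedding
  have disjoint : Disjoint (T.map forward) (T.map backward) := by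
    simp only [Finset.disjoint_left, Finset.mem_map, not_exists, not_and]
    rintro _ ⟨d, hd, rfl⟩ e he hed
    have symm_eq : e.symm = d := SimpleGraph.Dart.toProd_injective hed
    obtain rfl : e = d := hT he hd (by rw [← symm_eq, e.edge_symm])
    exact e.symm_ne symm_eq
  calc ENNReal.ofReal (∑ d ∈ T, G.cond d.fst d.snd * (g d.fst - g d.snd) ^ 2)
      = ∑ d ∈ T, F d.toProd :=
        ENNReal.ofReal_sum_of_nonneg fun d _ => mul_nonneg (cond_nonneg _ _) (sq_nonneg _)
    _ = 1 / 2 * (∑ d ∈ T, F d.toProd + ∑ d ∈ T, F d.toProd.swap) := by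
        simp only [F_swap]
        rw [← two_mul, ← mul_assoc, one_div, ENNReal.inv_mul_cancel two_ne_zero (by simp), one_mul]
    _ = 1 / 2 * ∑ p ∈ (T.map forward).disjUnion (T.map backward) disjoint, F p := by
        rw [Finset.sum_disjUnion, Finset.sum_map, Finset.sum_map]
        rfl
    _ ≤ energy G.cond g := mul_le_mul_right (ENNReal.sum_le_tsum _) _

theorem sq_sub_le_walkResistance_mul_energy {g : V → ℝ} (hg : energy G.cond g ≠ ⊤)
    {w : G.toSimpleGraph.Walk u v} (hw : w.IsTrail) :
    (g u - g v) ^ 2 ≤ walkResistance w * (energy G.cond g).toReal := by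
  classical
  have nodup : w.darts.Nodup := hw.edges_nodup.of_map
  have injOn : Set.InjOn SimpleGraph.Dart.edge
      (w.darts.toFinset : Set G.toSimpleGraph.Dart) := by
    rw [List.coe_toFinset]
    exact fun _ hd _ he => List.inj_on_of_nodup_map hw.edges_nodup hd he
  have cauchy_schwarz := Finset.sum_sq_le_sum_mul_sum_of_sq_le_mul w.darts.toFinset
    (r := fun d => g d.fst - g d.snd) (f := fun d => G.R d.fst d.snd)
    (g := fun d => G.cond d.fst d.snd * (g d.fst - g d.snd) ^ 2)
    (fun d _ => (G.Rpos _ _ d.adj).le)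
    (fun d _ => mul_nonneg (cond_nonneg _ _) (sq_nonneg _))
    (fun d _ => by rw [cond_of_adj d.adj, mul_inv_cancel_left₀ (G.Rpos _ _ d.adj).ne'])
  rw [List.sum_toFinset _ nodup, List.sum_toFinset _ nodup, sum_map_darts_sub] at cauchy_schwarz
  exact cauchy_schwarz.trans <| mul_le_mul_of_nonneg_left
    ((ENNReal.ofReal_le_iff_le_toReal hg).1 (sum_darts_le_energy g injOn)) (walkResistance_nonneg w)

theorem sq_sub_le_mul_energy_of_mem_pathLengths {g : V → ℝ} (hg : energy G.cond g ≠ ⊤) {L : ℝ}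
    (hL : L ∈ G.pathLengths u v) : (g u - g v) ^ 2 ≤ L * (energy G.cond g).toReal := by
  classical
  obtain ⟨w, rfl⟩ := exists_walk_of_mem_pathLengths hL
  exact (sq_sub_le_walkResistance_mul_energy hg w.bypass_isPath.isTrail).trans <|
    mul_le_mul_of_nonneg_right (walkResistance_bypass_le w) ENNReal.toReal_nonneg

variable [MetricSpace V]

theorem sq_sub_le_dist_mul_energy (hmet : G.IsPathMetric) (hconn : G.Connected) {g : V → ℝ}
    (hg : energy G.cond g ≠ ⊤) (u v : V) :
    (g u - g v) ^ 2 ≤ dist u v * (energy G.cond g).toReal := by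
  have bddBelow : BddBelow (G.pathLengths u v) := by
    refine ⟨0, fun L hL => ?_⟩
    obtain ⟨w, rfl⟩ := exists_walk_of_mem_pathLengths hL
    exact walkResistance_nonneg w
  obtain ⟨L, -, L_tendsto, hL⟩ := exists_seq_tendsto_sInf (hconn u v) bddBelow
  rw [hmet u v]
  exact ge_of_tendsto' (L_tendsto.mul_const _) fun n =>
    sq_sub_le_mul_energy_of_mem_pathLengths hg (hL n)

end Energy

section Convergence

variable {V ι : Type*} {G : WGraph V} {l : Filter ι} {fs : ι → V → ℝ} {f : V → ℝ}

theorem tendstoUniformlyOn_of_isBounded [MetricSpace V] (hmet : G.IsPathMetric)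
    (hconn : G.Connected) {u₀ : V} (hu₀ : Tendsto (fun i => fs i u₀) l (𝓝 (f u₀)))
    (henergy : Tendsto (fun i => energy G.cond fun v => fs i v - f v) l (𝓝 0))
    {s : Set V} (hs : Bornology.IsBounded s) : TendstoUniformlyOn fs f l s := by
  obtain ⟨r, hr⟩ := hs.subset_closedBall u₀
  let E : ι → ℝ := fun i => (energy G.cond fun v => fs i v - f v).toReal
  have E_tendsto : Tendsto E l (𝓝 0) := by
    simpa only [E, Function.comp_def, ENNReal.toReal_zero] using
      (ENNReal.tendsto_toReal ENNReal.zero_ne_top).comp henergy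
  have bound_tendsto : Tendsto (fun i => |fs i u₀ - f u₀| + √(r * E i)) l (𝓝 0) := by
    simpa using (hu₀.sub_const (f u₀)).abs.add (E_tendsto.const_mul r).sqrt
  rw [Metric.tendstoUniformlyOn_iff]
  intro ε hε
  filter_upwards [bound_tendsto.eventually_lt_const hε,
    henergy.eventually_ne ENNReal.zero_ne_top] with i hi henergy_i v hv
  have oscillation : |(fs i v - f v) - (fs i u₀ - f u₀)| ≤ √(r * E i) :=
    Real.abs_le_sqrt <| (sq_sub_le_dist_mul_energy hmet hconn henergy_i v u₀).trans <|
      mul_le_mul_of_nonneg_right (hr hv) ENNReal.toReal_nonneg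
  rw [dist_comm, Real.dist_eq]
  linarith [abs_sub_abs_le_abs_sub (fs i v - f v) (fs i u₀ - f u₀)]

theorem tendsto_zero_comap_nhds_of_tendsto_energy [MetricSpace V] (hmet : G.IsPathMetric)
    (hconn : G.Connected) [l.NeBot] (hfs : ∀ i, (Function.support (fs i)).Finite)
    {u₀ : V} (hu₀ : Tendsto (fun i => fs i u₀) l (𝓝 (f u₀)))
    (henergy : Tendsto (fun i => energy G.cond fun v => fs i v - f v) l (𝓝 0))
    {x : Completion V} (hx : x ∉ Set.range ((↑) : V → Completion V)) :
    Tendsto f (comap (↑) (𝓝 x)) (𝓝 0) := by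
  obtain ⟨s, hs, hbdd⟩ := exists_isBounded_mem_comap_coe_nhds x
  have uniform : TendstoUniformlyOnFilter fs f l (comap (↑) (𝓝 x)) :=
    (tendstoUniformlyOn_of_isBounded hmet hconn hu₀ henergy
      hbdd).tendstoUniformlyOnFilter.mono_right (le_principal_iff.2 hs)
  refine uniform.tendsto_of_eventually_tendsto (.of_forall fun i => ?_) tendsto_const_nhds
  exact tendsto_const_nhds.congr' (eventuallyEq_zero_comap_nhds_of_finite_support (hfs i) hx).symm

theorem tendsto_apply_of_tendsto_tsum {μ : V → ℝ} {v : V} (hμ : 0 < μ v)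
    (h : Tendsto (fun i => ∑' v, ENNReal.ofReal ((fs i v - f v) ^ 2 * μ v)) l (𝓝 0)) :
    Tendsto (fun i => fs i v) l (𝓝 (f v)) := by
  have weighted : Tendsto (fun i => ENNReal.ofReal ((fs i v - f v) ^ 2 * μ v)) l (𝓝 0) :=
    tendsto_nhds_bot_mono' h fun _ => ENNReal.le_tsum v
  have sq_dist : Tendsto (fun i => (fs i v - f v) ^ 2) l (𝓝 0) := by
    have := ((ENNReal.tendsto_toReal ENNReal.zero_ne_top).comp weighted).div_const (μ v)
    simpa [Function.comp_def, ENNReal.toReal_ofReal (mul_nonneg (sq_nonneg _) hμ.le), hμ.ne']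
      using this
  rw [tendsto_iff_dist_tendsto_zero]
  simpa [Real.dist_eq, Real.sqrt_sq_eq_abs] using sq_dist.sqrt

end Convergence

end WGraph

theorem h10_vanishes_on_boundary_general {V ι : Type*} [MetricSpace V]
    (G : WGraph V) (hmet : G.IsPathMetric) (hconn : G.Connected)
    {l : Filter ι} [l.NeBot] {fs : ι → V → ℝ} {f : V → ℝ}
    (hfs : ∀ i, (Function.support (fs i)).Finite)
    {u₀ : V} (hu₀ : Tendsto (fun i => fs i u₀) l (𝓝 (f u₀)))
    (henergy : Tendsto (fun i => WGraph.energy G.cond fun v => fs i v - f v) l (𝓝 0))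
    {Φ : Completion V → ℝ} (hΦext : ∀ v : V, Φ ↑v = f v)
    {x : Completion V} (hx : x ∉ Set.range ((↑) : V → Completion V)) (hΦcont : ContinuousAt Φ x) :
    Φ x = 0 := by
  have : (comap ((↑) : V → Completion V) (𝓝 x)).NeBot :=
    Completion.isDenseInducing_coe.comap_nhds_neBot x
  have hΦ : Tendsto f (comap (↑) (𝓝 x)) (𝓝 (Φ x)) := by
    simpa only [Function.comp_def, hΦext] using
      hΦcont.tendsto.comp (tendsto_comap (f := ((↑) : V → Completion V)))
  exact tendsto_nhds_unique hΦ <|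
    WGraph.tendsto_zero_comap_nhds_of_tendsto_energy hmet hconn hfs hu₀ henergy hx

/-- on a connected graph of finite diameter, a function in
`H¹₀(μ)` (an `H¹`-limit of finitely supported functions) has continuous
extension vanishing at every point of the graph boundary `Ḡ \ G`. -/
theorem h10_vanishes_on_boundary {V : Type*} [MetricSpace V] [Countable V]
    (G : WGraph V) (hmet : G.IsPathMetric) (hconn : G.Connected)
    (μ : V → ℝ) (hμ : ∀ v, 0 < μ v)
    (D : ℝ) (hD : ∀ u v : V, dist u v ≤ D)
    (f : V → ℝ) (hf2 : Summable fun v => f v ^ 2 * μ v)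
    (hE : WGraph.energy G.cond f ≠ ⊤)
    (fs : ℕ → V → ℝ) (hfs : ∀ n, (Function.support (fs n)).Finite)
    (hconv : Filter.Tendsto
      (fun n => (∑' v, ENNReal.ofReal ((fs n v - f v) ^ 2 * μ v)) +
        WGraph.energy G.cond (fun v => fs n v - f v))
      Filter.atTop (nhds 0))
    (Φ : UniformSpace.Completion V → ℝ) (hΦcont : Continuous Φ)
    (hΦext : ∀ v : V, Φ ↑v = f v) :
    ∀ x : UniformSpace.Completion V,
      x ∉ Set.range ((↑) : V → UniformSpace.Completion V) → Φ x = 0 := by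
  intro x hx
  obtain ⟨u₀⟩ := Completion.denseRange_coe.nonempty_iff.2 ⟨x⟩
  have hl2 := tendsto_nhds_bot_mono' hconv fun _ => le_self_add
  have henergy := tendsto_nhds_bot_mono' hconv fun _ => le_add_self
  exact h10_vanishes_on_boundary_general G hmet hconn hfs
    (WGraph.tendsto_apply_of_tendsto_tsum (hμ u₀) hl2) henergy hΦext hx hΦcont.continuousAt
end
end
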